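/- Every convex multiplicative system of means is equal to the power mean M_p for some p ∈ [1,∞]; that is, if M is a system of means that is both convex and multiplicative, then there exists p ∈ [1,∞] such that M(w,x) = M_p(w,x) for every n ≥ 1, every w ∈ Δ_n and every x ∈ (ℝ≥0)^n. -/

import Mathlib

open scoped NNReal ENNReal BigOperators

/-- The power mean `M_p` of order `p ∈ [0,∞]` with weights `w` and arguments `x`. -/
noncomputable def powerMean (p : ℝ≥0∞) {n : ℕ} (w x : Fin n → ℝ≥0) : ℝ≥0 :=
  if p = ∞ then (Finset.univ.filter (fun i => 0 < w i)).sup x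
  else if p = 0 then ∏ i, x i ^ ((w i : ℝ))
  else (∑ i, w i * x i ^ p.toReal) ^ (1 / p.toReal)

/-- A system of means: for each `n`, a function `M n : Δ_n × ℝ≥0ⁿ → ℝ≥0`
(defined on all of `ℝ≥0ⁿ × ℝ≥0ⁿ`, with the axioms demanded only when `∑ w = 1`),
satisfying functoriality, consistency and monotonicity. -/
structure MeanSystem where
  M : ∀ n : ℕ, (Fin n → ℝ≥0) → (Fin n → ℝ≥0) → ℝ≥0
  functorial : ∀ {m n : ℕ} (f : Fin m → Fin n) (w : Fin m → ℝ≥0),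
    (∑ i, w i) = 1 → ∀ x : Fin n → ℝ≥0,
      M n (fun j => ∑ i ∈ Finset.univ.filter (fun i => f i = j), w i) x = M m w (x ∘ f)
  consistent : ∀ c : ℝ≥0, M 1 (fun _ => 1) (fun _ => c) = c
  mono : ∀ {n : ℕ} (w x y : Fin n → ℝ≥0), (∑ i, w i) = 1 →
    (∀ i, x i ≤ y i) → M n w x ≤ M n w y

/-- Multiplicativity of a system of means, with respect to the fixed bijection
`finProdFinEquiv : Fin m × Fin n ≃ Fin (m * n)`. -/
def MeanSystem.IsMultiplicative (S : MeanSystem) : Prop :=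
  ∀ {m n : ℕ} (w x : Fin m → ℝ≥0) (v y : Fin n → ℝ≥0),
    (∑ i, w i) = 1 → (∑ j, v j) = 1 →
    S.M (m * n) (fun k => w (finProdFinEquiv.symm k).1 * v (finProdFinEquiv.symm k).2)
        (fun k => x (finProdFinEquiv.symm k).1 * y (finProdFinEquiv.symm k).2)
      = S.M m w x * S.M n v y

/-- Convexity of a system of means. -/
def MeanSystem.IsConvex (S : MeanSystem) : Prop :=
  ∀ {n : ℕ} (w x y : Fin n → ℝ≥0), (∑ i, w i) = 1 →
    S.M n w (fun i => (x i + y i) / 2) ≤ max (S.M n w x) (S.M n w y)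

/-!
The means of indicator functions are given by a function `φ` on `[0, 1]`, which is multiplicative
and bounded by `1`. By convexity `φ (1 / 2) ≥ 1 / 2`, so `φ a = a ^ s` with `0 ≤ s ≤ 1`.

Split `x` into its level sets. Monotonicity gives `c * φ (w {x = c}) ≤ M w x` for each value `c`,
while convexity and homogeneity bound `M w x` by twice the number of values of `x` times the largest
of these terms. For `0 < s`, the power mean of order `p = s⁻¹` is squeezed in the same way, so the
two agree up to a factor linear in the number of values of `x`. The `N`-th tensor power of `x` has
only polynomially many values in `N`, and taking `N`-th roots removes the factor. For `s = 0`,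
`φ = 1` on `(0, 1]` and the lower bound alone gives the maximum.
-/

open Finset Filter Topology

theorem addMonoidHom_nnreal_apply_of_nonneg {f : ℝ≥0 →+ ℝ} (hf : ∀ x, 0 ≤ f x) (x : ℝ≥0) :
    f x = x * f 1 := by
  have hmono : Monotone f := fun a b hab => by
    rw [← add_tsub_cancel_of_le hab, map_add]
    exact le_add_of_nonneg_right (hf _)
  have hnat (n : ℕ) : f n = n * f 1 := by
    rw [← nsmul_one n, map_nsmul, nsmul_eq_mul]
  have hmul (n : ℕ) : f (n * x) = n * f x := by
    rw [← nsmul_eq_mul, map_nsmul, nsmul_eq_mul]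
  have hbound (n : ℕ) : n • |f x - x * f 1| ≤ f 1 := by
    have hfloor := hmono (Nat.floor_le (zero_le (a := n * x)))
    have hceil := hmono (Nat.lt_floor_add_one (n * x)).le
    rw [hnat, hmul] at hfloor
    rw [map_add, hnat, hmul] at hceil
    have hfloor_mul : (⌊n * x⌋₊ : ℝ) * f 1 ≤ n * x * f 1 :=
      mul_le_mul_of_nonneg_right (mod_cast Nat.floor_le (zero_le (a := n * x))) (hf 1)
    have hceil_mul : (n * x : ℝ) * f 1 ≤ (⌊n * x⌋₊ + 1) * f 1 :=
      mul_le_mul_of_nonneg_right (mod_cast (Nat.lt_floor_add_one (n * x)).le) (hf 1)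
    rw [nsmul_eq_mul, ← Nat.abs_cast, ← abs_mul, abs_le]
    constructor <;> linarith
  have habs : |f x - x * f 1| ≤ 0 := by
    by_contra! hpos
    obtain ⟨n, hn⟩ := exists_lt_nsmul hpos (f 1)
    exact hn.not_ge (hbound n)
  exact sub_eq_zero.1 (abs_nonpos_iff.1 habs)

theorem map_pos_of_map_mul {φ : ℝ≥0 → ℝ≥0}
    (hmul : ∀ a ≤ 1, ∀ b ≤ 1, φ (a * b) = φ a * φ b) {c : ℝ≥0} (hc : c < 1) (hφc : φ c ≠ 0)
    {a : ℝ≥0} (ha : 0 < a) (ha1 : a ≤ 1) : 0 < φ a := by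
  have hpow (n : ℕ) : φ (c ^ n) ≠ 0 := by
    induction n with
    | zero =>
      rw [← one_mul c, hmul 1 le_rfl c hc.le] at hφc
      simpa using left_ne_zero_of_mul hφc
    | succ n ih =>
      rw [pow_succ, hmul _ (pow_le_one₀ zero_le hc.le) c hc.le]
      exact mul_ne_zero ih hφc
  obtain ⟨n, hn⟩ := exists_pow_lt_of_lt_one ha hc
  have hdiv : φ (c ^ n) = φ a * φ (c ^ n / a) := by
    rw [← hmul a ha1 _ (div_le_one_of_le₀ hn.le zero_le), mul_div_cancel₀ _ ha.ne']
  exact pos_iff_ne_zero.2 (left_ne_zero_of_mul (hdiv ▸ hpow n))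

theorem exists_eq_rpow_of_map_mul {φ : ℝ≥0 → ℝ≥0} (hpos : ∀ a, 0 < a → a ≤ 1 → 0 < φ a)
    (hle : ∀ a ≤ 1, φ a ≤ 1) (hmul : ∀ a ≤ 1, ∀ b ≤ 1, φ (a * b) = φ a * φ b) :
    ∃ s : ℝ, 0 ≤ s ∧ ∀ a, 0 < a → a ≤ 1 → φ a = a ^ s := by
  let e (t : ℝ≥0) : ℝ≥0 := (Real.exp (-t)).toNNReal
  have he_pos (t : ℝ≥0) : 0 < e t := Real.toNNReal_pos.2 (Real.exp_pos _)
  have he_le (t : ℝ≥0) : e t ≤ 1 := by simp [e]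
  have he_add (t u : ℝ≥0) : e (t + u) = e t * e u := by
    simp only [e, NNReal.coe_add, neg_add, Real.exp_add, Real.toNNReal_mul (Real.exp_pos _).le]
  have he_log (t : ℝ≥0) : Real.log (e t) = -t := by
    rw [Real.coe_toNNReal _ (Real.exp_pos _).le, Real.log_exp]
  have hφe (t : ℝ≥0) : 0 < (φ (e t) : ℝ) := mod_cast hpos _ (he_pos t) (he_le t)
  have hadd (t u : ℝ≥0) :
      -Real.log (φ (e (t + u))) = -Real.log (φ (e t)) + -Real.log (φ (e u)) := by
    rw [he_add, hmul _ (he_le t) _ (he_le u), NNReal.coe_mul,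
      Real.log_mul (hφe t).ne' (hφe u).ne', neg_add]
  let f : ℝ≥0 →+ ℝ :=
    { toFun := fun t => -Real.log (φ (e t))
      map_zero' := by simpa using hadd 0 0
      map_add' := hadd }
  have hf (t : ℝ≥0) : 0 ≤ f t :=
    neg_nonneg.2 (Real.log_nonpos (φ (e t)).coe_nonneg (mod_cast hle _ (he_le t)))
  refine ⟨f 1, hf 1, fun a ha ha1 => ?_⟩
  obtain ⟨t, rfl⟩ : ∃ t, e t = a := by
    refine ⟨.mk (-Real.log a) (neg_nonneg.2 (Real.log_nonpos a.coe_nonneg (mod_cast ha1))), ?_⟩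
    simp only [e, NNReal.coe_mk, neg_neg]
    rw [Real.exp_log (mod_cast ha), Real.toNNReal_coe]
  have hlog : Real.log (φ (e t)) = -t * f 1 := by
    rw [neg_mul, ← addMonoidHom_nnreal_apply_of_nonneg hf t]
    exact (neg_neg _).symm
  rw [← NNReal.coe_inj, NNReal.coe_rpow, Real.rpow_def_of_pos (mod_cast he_pos t), he_log,
    ← hlog, Real.exp_log (hφe t)]

theorem le_of_forall_pow_le_mul_pow {a b C : ℝ≥0} {m : ℕ}
    (h : ∀ N : ℕ, a ^ N ≤ C * (N + 1) ^ m * b ^ N) : a ≤ b := by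
  by_contra! hba
  have ha : 0 < a := pos_of_gt hba
  have hbound : ∀ᶠ N : ℕ in atTop, (1 : ℝ) ≤ C * 2 ^ m * (N ^ m * (b / a) ^ N) := by
    filter_upwards [eventually_ge_atTop 1] with N hN
    have hN' : (N : ℝ) + 1 ≤ 2 * N := by norm_cast; lia
    have : (a : ℝ) ^ N ≤ C * (N + 1) ^ m * b ^ N := mod_cast h N
    rw [div_pow, mul_div_assoc', mul_div_assoc', one_le_div (by positivity)]
    calc (a : ℝ) ^ N ≤ C * (N + 1) ^ m * b ^ N := this
      _ ≤ C * (2 * N) ^ m * b ^ N := by gcongr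
      _ = C * 2 ^ m * (N ^ m * b ^ N) := by ring
  have hlim := (tendsto_pow_const_mul_const_pow_of_lt_one m (r := b / a) (by positivity)
    ((div_lt_one (mod_cast ha)).2 (mod_cast hba))).const_mul (C * 2 ^ m : ℝ)
  rw [mul_zero] at hlim
  exact zero_lt_one.not_ge (ge_of_tendsto hlim hbound)

theorem card_image_prod_le {ι M : Type*} [Fintype ι] [CommMonoid M] [DecidableEq M]
    (x : ι → M) (N : ℕ) :
    #(univ.image fun f : Fin N → ι => ∏ k, x (f k)) ≤ (N + 1) ^ Fintype.card ι := by
  classical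
  have hsub : (univ.image fun f : Fin N → ι => ∏ k, x (f k)) ⊆
      (Fintype.piFinset fun _ : ι => range (N + 1)).image fun c => ∏ j, x j ^ c j := by
    refine image_subset_iff.2 fun f _ => mem_image.2 ⟨fun j => #{k | f k = j}, ?_, ?_⟩
    · simpa [Nat.lt_succ_iff] using fun j => card_le_univ (α := Fin N) {k | f k = j}
    · simp_rw [← prod_fiberwise' univ f x, prod_const]
  simpa using (card_le_card hsub).trans card_image_le

theorem sum_mul_eq_one {ι κ R : Type*} [Fintype ι] [Fintype κ] [NonAssocSemiring R]
    {w : ι → R} {v : κ → R} (hw : ∑ i, w i = 1) (hv : ∑ j, v j = 1) :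
    ∑ k : ι × κ, w k.1 * v k.2 = 1 := by
  rw [Fintype.sum_prod_type, ← Fintype.sum_mul_sum, hw, hv, one_mul]

theorem sum_prod_eq_one {ι R : Type*} [Fintype ι] [CommSemiring R] {w : ι → R}
    (hw : ∑ i, w i = 1) (N : ℕ) :
    ∑ f : Fin N → ι, ∏ k, w (f k) = 1 := by
  rw [← Fintype.sum_pow, hw, one_pow]

theorem sum_prod_mul_rpow {ι : Type*} [Fintype ι] (w x : ι → ℝ≥0) (p : ℝ) (N : ℕ) :
    ∑ f : Fin N → ι, (∏ k, w (f k)) * (∏ k, x (f k)) ^ p = (∑ i, w i * x i ^ p) ^ N := by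
  simp_rw [Fintype.sum_pow, prod_mul_distrib, NNReal.finsetProd_rpow]

namespace MeanSystem

section Mean

variable (S : MeanSystem) {ι κ : Type*} [Fintype ι] [Fintype κ]

/-- The mean of `x` with weights `w` over an arbitrary finite index type, transported to `Fin n`
along a chosen enumeration; by functoriality the choice is immaterial. -/
noncomputable def mean (w x : ι → ℝ≥0) : ℝ≥0 :=
  S.M (Fintype.card ι) (w ∘ (Fintype.equivFin ι).symm) (x ∘ (Fintype.equivFin ι).symm)

theorem M_eq_of_comp {m n : ℕ} (f : Fin m → Fin n) {w : Fin m → ℝ≥0} (hw : ∑ i, w i = 1)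
    {v : Fin n → ℝ≥0} (hv : ∀ j, v j = ∑ i with f i = j, w i) (x : Fin n → ℝ≥0) :
    S.M n v x = S.M m w (x ∘ f) := by
  rw [← S.functorial f w hw x, funext hv]

theorem mean_eq_of_comp [DecidableEq κ] (f : ι → κ) {w : ι → ℝ≥0} (hw : ∑ i, w i = 1)
    {v : κ → ℝ≥0} (hv : ∀ j, v j = ∑ i with f i = j, w i) (x : κ → ℝ≥0) :
    S.mean v x = S.mean w (x ∘ f) := by
  let eι := Fintype.equivFin ι
  let eκ := Fintype.equivFin κ
  rw [mean, S.M_eq_of_comp (eκ ∘ f ∘ eι.symm) ((Equiv.sum_comp _ w).trans hw), mean]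
  · congr 1
    ext k
    simp [eκ, eι]
  · intro j
    rw [Function.comp_apply, hv, sum_filter, sum_filter,
      ← Equiv.sum_comp eι.symm]
    simp [eι, eκ, Equiv.eq_symm_apply]

theorem mean_comp_equiv (e : ι ≃ κ) {w : κ → ℝ≥0} (hw : ∑ j, w j = 1) (x : κ → ℝ≥0) :
    S.mean (w ∘ e) (x ∘ e) = S.mean w x := by
  classical
  refine (S.mean_eq_of_comp e ((Equiv.sum_comp e w).trans hw) (fun j => ?_) x).symm
  rw [sum_filter, Equiv.sum_comp e fun i => if i = j then w i else 0]
  simp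

theorem mean_fin {n : ℕ} {w : Fin n → ℝ≥0} (hw : ∑ i, w i = 1) (x : Fin n → ℝ≥0) :
    S.mean w x = S.M n w x := by
  let e := (Fintype.equivFin (Fin n)).symm
  refine (S.M_eq_of_comp e ((Equiv.sum_comp _ w).trans hw) (fun j => ?_) x).symm
  rw [sum_filter]
  exact .trans (by simp) (Equiv.sum_comp e fun i => if i = j then w i else 0).symm

theorem mean_mono {w : ι → ℝ≥0} (hw : ∑ i, w i = 1) {x y : ι → ℝ≥0} (hxy : x ≤ y) :
    S.mean w x ≤ S.mean w y :=
  S.mono _ _ _ ((Equiv.sum_comp _ w).trans hw) fun _ => hxy _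

theorem mean_const {w : ι → ℝ≥0} (hw : ∑ i, w i = 1) (c : ℝ≥0) :
    S.mean w (fun _ => c) = c := by
  have hpush : S.mean (fun _ : Fin 1 => 1) (fun _ => c) = S.mean w fun _ => c :=
    S.mean_eq_of_comp (fun _ => 0) hw (fun j => by simp [hw, Subsingleton.elim 0 j]) _
  rw [← hpush, S.mean_fin (by simp), S.consistent]

theorem mean_mono_of_pos {w : ι → ℝ≥0} (hw : ∑ i, w i = 1) {x y : ι → ℝ≥0}
    (hxy : ∀ i, 0 < w i → x i ≤ y i) : S.mean w x ≤ S.mean w y := by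
  classical
  let v : {i // 0 < w i} → ℝ≥0 := fun i => w i
  have hv : ∑ i, v i = 1 := by
    rw [← hw]
    exact Fintype.sum_of_injective _ Subtype.val_injective v w (by simp) fun _ => rfl
  have hpush (j : ι) : w j = ∑ i : {i // 0 < w i} with i.val = j, v i := by
    by_cases hj : 0 < w j
    · have hfiber : ({i | i.val = j} : Finset {i // 0 < w i}) = {⟨j, hj⟩} := by
        ext i
        simp [Subtype.ext_iff]
      rw [hfiber, sum_singleton]
    · have hfiber : ({i | i.val = j} : Finset {i // 0 < w i}) = ∅ :=
        filter_false_of_mem fun i _ hij => hj (hij ▸ i.2)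
      rw [hfiber, sum_empty]
      exact nonpos_iff_eq_zero.1 (not_lt.1 hj)
  rw [S.mean_eq_of_comp Subtype.val hv hpush, S.mean_eq_of_comp Subtype.val hv hpush]
  exact S.mean_mono hv fun i => hxy i i.2

end Mean

section Multiplicative

variable {S : MeanSystem} {ι κ : Type*} [Fintype ι] [Fintype κ]

theorem mean_mul (hmul : S.IsMultiplicative) {w : ι → ℝ≥0} {v : κ → ℝ≥0}
    (hw : ∑ i, w i = 1) (hv : ∑ j, v j = 1) (x : ι → ℝ≥0) (y : κ → ℝ≥0) :
    S.mean (fun k : ι × κ => w k.1 * v k.2) (fun k => x k.1 * y k.2) =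
      S.mean w x * S.mean v y := by
  let e : Fin (Fintype.card ι * Fintype.card κ) ≃ ι × κ :=
    finProdFinEquiv.symm.trans ((Fintype.equivFin ι).symm.prodCongr (Fintype.equivFin κ).symm)
  have hwv := sum_mul_eq_one hw hv
  rw [← S.mean_comp_equiv e hwv, S.mean_fin (w := _ ∘ e) ((Equiv.sum_comp e _).trans hwv)]
  exact hmul _ (x ∘ (Fintype.equivFin ι).symm) _ (y ∘ (Fintype.equivFin κ).symm)
    ((Equiv.sum_comp _ w).trans hw) ((Equiv.sum_comp _ v).trans hv)

theorem mean_const_mul (hmul : S.IsMultiplicative) {w : ι → ℝ≥0} (hw : ∑ i, w i = 1)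
    (c : ℝ≥0) (x : ι → ℝ≥0) : S.mean w (fun i => c * x i) = c * S.mean w x := by
  have hunit : ∑ _i : Unit, (1 : ℝ≥0) = 1 := by simp
  have hprod := S.mean_comp_equiv (Equiv.punitProd ι).symm (sum_mul_eq_one hunit hw)
    fun k => c * x k.2
  rw [mean_mul hmul hunit hw (fun _ => c), S.mean_const hunit] at hprod
  simpa [Function.comp_def] using hprod

theorem mean_pow (hmul : S.IsMultiplicative) {w : ι → ℝ≥0} (hw : ∑ i, w i = 1)
    (x : ι → ℝ≥0) (N : ℕ) :
    S.mean (fun f : Fin N → ι => ∏ k, w (f k)) (fun f => ∏ k, x (f k)) = S.mean w x ^ N := by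
  induction N with
  | zero => simpa using S.mean_const (sum_prod_eq_one hw 0) 1
  | succ N ih =>
    rw [pow_succ', ← ih, ← mean_mul hmul hw (sum_prod_eq_one hw N),
      ← S.mean_comp_equiv (Fin.consEquiv fun _ => ι) (sum_prod_eq_one hw (N + 1))]
    simp [Function.comp_def, Fin.consEquiv, Fin.prod_univ_succ]

end Multiplicative

section BernoulliMean

variable (S : MeanSystem) {ι : Type*} [Fintype ι]

/-- The mean of the values `1` and `0` with weights `a` and `1 - a`. This function on `[0, 1]`
determines the means of all indicator functions; for `M_p` it is `a ↦ a ^ (1 / p)`. -/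
noncomputable def bernoulliMean (a : ℝ≥0) : ℝ≥0 :=
  S.mean (fun b : Bool => if b then a else 1 - a) (fun b => if b then 1 else 0)

theorem mean_indicator {w : ι → ℝ≥0} (hw : ∑ i, w i = 1) (A : ι → Prop) [DecidablePred A] :
    S.mean w (fun i => if A i then 1 else 0) = S.bernoulliMean (∑ i with A i, w i) := by
  rw [bernoulliMean, S.mean_eq_of_comp (fun i => decide (A i)) hw]
  · simp [Function.comp_def]
  · rintro (_ | _)
    · simp [← hw, ← sum_filter_add_sum_filter_not univ A w]
    · simp

theorem bernoulliMean_zero : S.bernoulliMean 0 = 0 := by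
  have hunit : ∑ _i : Unit, (1 : ℝ≥0) = 1 := by simp
  simpa [S.mean_const hunit] using (S.mean_indicator hunit fun _ => False).symm

theorem bernoulliMean_le_one {a : ℝ≥0} (ha : a ≤ 1) : S.bernoulliMean a ≤ 1 := by
  have hw : ∑ b : Bool, (if b then a else 1 - a) = 1 := by simp [ha]
  refine (S.mean_mono hw fun b => ?_).trans (S.mean_const hw 1).le
  cases b <;> simp

variable {S}

theorem bernoulliMean_mul (hmul : S.IsMultiplicative) {a b : ℝ≥0} (ha : a ≤ 1) (hb : b ≤ 1) :
    S.bernoulliMean (a * b) = S.bernoulliMean a * S.bernoulliMean b := by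
  have hwa : ∑ c : Bool, (if c then a else 1 - a) = 1 := by simp [ha]
  have hwb : ∑ c : Bool, (if c then b else 1 - b) = 1 := by simp [hb]
  have hand := S.mean_indicator (sum_mul_eq_one hwa hwb) fun k => k.2 ∧ k.1
  rw [bernoulliMean.eq_def S a, bernoulliMean.eq_def S b, ← mean_mul hmul hwa hwb]
  simpa [sum_filter, Fintype.sum_prod_type, ite_and] using hand.symm

theorem mean_add_div_two_le (hconv : S.IsConvex) {w : ι → ℝ≥0} (hw : ∑ i, w i = 1)
    (x y : ι → ℝ≥0) :
    S.mean w (fun i => (x i + y i) / 2) ≤ max (S.mean w x) (S.mean w y) :=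
  hconv _ _ _ ((Equiv.sum_comp _ w).trans hw)

theorem half_le_bernoulliMean_half (hconv : S.IsConvex) : 1 / 2 ≤ S.bernoulliMean (1 / 2) := by
  have hw : ∑ _b : Bool, (1 / 2 : ℝ≥0) = 1 := by simp
  have hcoin (c : Bool) :
      S.mean (fun _ => 1 / 2) (fun b => if b = c then 1 else 0) = S.bernoulliMean (1 / 2) := by
    simpa [filter_eq'] using S.mean_indicator hw (· = c)
  have hmid : (fun b : Bool => ((if b = true then 1 else 0) + if b = false then 1 else 0) / 2) =
      fun _ => (1 / 2 : ℝ≥0) := by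
    ext b
    cases b <;> simp
  have hle := mean_add_div_two_le hconv hw (fun b => if b = true then 1 else 0)
    fun b => if b = false then 1 else 0
  rwa [hmid, S.mean_const hw, hcoin, hcoin, max_self] at hle

theorem exists_bernoulliMean_eq_rpow (hconv : S.IsConvex) (hmul : S.IsMultiplicative) :
    ∃ s : ℝ, 0 ≤ s ∧ s ≤ 1 ∧ ∀ a, 0 < a → a ≤ 1 → S.bernoulliMean a = a ^ s := by
  have hhalf := half_le_bernoulliMean_half hconv
  have hmap (a) (ha : a ≤ 1) (b) (hb : b ≤ 1) := bernoulliMean_mul hmul ha hb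
  have hlt : (1 / 2 : ℝ≥0) < 1 := NNReal.half_lt_self one_ne_zero
  obtain ⟨s, hs, heq⟩ := exists_eq_rpow_of_map_mul
    (fun _ => map_pos_of_map_mul hmap hlt (one_half_pos.trans_le hhalf).ne')
    (fun _ => S.bernoulliMean_le_one) hmap
  rw [heq _ one_half_pos hlt.le] at hhalf
  refine ⟨s, hs, le_of_not_gt fun hs1 => hhalf.not_gt ?_, heq⟩
  simpa using NNReal.rpow_lt_rpow_of_exponent_gt one_half_pos hlt hs1

end BernoulliMean

section Bounds

variable {S : MeanSystem} {ι κ : Type*} [Fintype ι]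

theorem mean_sum_le_two_pow_mul (hconv : S.IsConvex) (hmul : S.IsMultiplicative)
    {w : ι → ℝ≥0} (hw : ∑ i, w i = 1) {g : κ → ι → ℝ≥0} {B : ℝ≥0} {k : ℕ} {s : Finset κ}
    (hs : #s ≤ 2 ^ k) (hB : ∀ c ∈ s, S.mean w (g c) ≤ B) :
    S.mean w (∑ c ∈ s, g c) ≤ 2 ^ k * B := by
  classical
  induction k generalizing s with
  | zero =>
    rcases s.eq_empty_or_nonempty with rfl | hne
    · exact (S.mean_const hw 0).trans_le zero_le
    · obtain ⟨c, rfl⟩ := card_eq_one.1 (le_antisymm hs hne.card_pos)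
      simpa using hB c
  | succ k ih =>
    obtain ⟨t, hts, ht⟩ := exists_subset_card_eq (min_le_left #s (2 ^ k))
    have hsdiff : #(s \ t) ≤ 2 ^ k := by
      rw [card_sdiff_of_subset hts]
      lia
    have hdouble : ∑ c ∈ s, g c =
        fun i => 2 * (((∑ c ∈ t, g c) i + (∑ c ∈ s \ t, g c) i) / 2) := by
      ext i
      rw [mul_div_cancel₀ _ two_ne_zero, ← Pi.add_apply, add_comm, sum_sdiff hts]
    rw [hdouble, mean_const_mul hmul hw, pow_succ', mul_assoc]
    gcongr
    exact (mean_add_div_two_le hconv hw _ _).trans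
      (max_le (ih (by lia) fun c hc => hB c (hts hc))
        (ih hsdiff fun c hc => hB c (sdiff_subset hc)))

theorem mean_sum_le (hconv : S.IsConvex) (hmul : S.IsMultiplicative)
    {w : ι → ℝ≥0} (hw : ∑ i, w i = 1) {g : κ → ι → ℝ≥0} {B : ℝ≥0} {s : Finset κ}
    (hB : ∀ c ∈ s, S.mean w (g c) ≤ B) : S.mean w (∑ c ∈ s, g c) ≤ 2 * #s * B := by
  rcases s.eq_empty_or_nonempty with rfl | hne
  · exact (S.mean_const hw 0).trans_le zero_le
  · refine (mean_sum_le_two_pow_mul hconv hmul hw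
      (Nat.lt_pow_succ_log_self one_lt_two #s).le hB).trans ?_
    rw [pow_succ']
    gcongr
    exact_mod_cast Nat.pow_log_le_self 2 hne.card_pos.ne'

theorem mean_ite (hmul : S.IsMultiplicative) {w : ι → ℝ≥0} (hw : ∑ i, w i = 1)
    (A : ι → Prop) [DecidablePred A] (c : ℝ≥0) :
    S.mean w (fun i => if A i then c else 0) = c * S.bernoulliMean (∑ i with A i, w i) := by
  simp [← S.mean_indicator hw, ← mean_const_mul hmul hw]

theorem mul_bernoulliMean_le_mean (hmul : S.IsMultiplicative) {w : ι → ℝ≥0}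
    (hw : ∑ i, w i = 1) (x : ι → ℝ≥0) (c : ℝ≥0) :
    c * S.bernoulliMean (∑ i with x i = c, w i) ≤ S.mean w x := by
  rw [← mean_ite hmul hw]
  refine S.mean_mono hw fun i => ?_
  dsimp only
  split_ifs with hi
  exacts [hi.ge, zero_le]

theorem mean_le_of_forall_mul_bernoulliMean_le (hconv : S.IsConvex) (hmul : S.IsMultiplicative)
    {w : ι → ℝ≥0} (hw : ∑ i, w i = 1) {x : ι → ℝ≥0} {B : ℝ≥0}
    (hB : ∀ c, c * S.bernoulliMean (∑ i with x i = c, w i) ≤ B) :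
    S.mean w x ≤ 2 * #(univ.image x) * B := by
  have hlevels : x = ∑ c ∈ univ.image x, fun i => if x i = c then c else 0 := by
    ext i
    simp
  conv_lhs => rw [hlevels]
  exact mean_sum_le hconv hmul hw fun c _ => (mean_ite hmul hw _ c).trans_le (hB c)

theorem bernoulliMean_rpow {p : ℝ} (hp : 0 < p)
    (hS : ∀ a, 0 < a → a ≤ 1 → S.bernoulliMean a = a ^ p⁻¹) {a : ℝ≥0} (ha : a ≤ 1) :
    S.bernoulliMean a ^ p = a := by
  rcases eq_zero_or_pos a with rfl | hpos
  · rw [bernoulliMean_zero, NNReal.zero_rpow hp.ne']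
  · rw [hS a hpos ha, NNReal.rpow_inv_rpow hp.ne']

theorem mul_bernoulliMean_rpow {p : ℝ} (hp : 0 < p)
    (hS : ∀ a, 0 < a → a ≤ 1 → S.bernoulliMean a = a ^ p⁻¹) {w : ι → ℝ≥0}
    (hw : ∑ i, w i = 1) (x : ι → ℝ≥0) (c : ℝ≥0) :
    (c * S.bernoulliMean (∑ i with x i = c, w i)) ^ p = ∑ i with x i = c, w i * x i ^ p := by
  have hle : ∑ i with x i = c, w i ≤ 1 := hw ▸ sum_le_sum_of_subset (filter_subset _ _)
  rw [NNReal.mul_rpow, bernoulliMean_rpow hp hS hle, mul_comm, sum_mul]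
  exact sum_congr rfl fun i hi => by rw [(mem_filter.1 hi).2]

theorem sum_mul_rpow_le (hmul : S.IsMultiplicative) {p : ℝ} (hp : 0 < p)
    (hS : ∀ a, 0 < a → a ≤ 1 → S.bernoulliMean a = a ^ p⁻¹) {w : ι → ℝ≥0}
    (hw : ∑ i, w i = 1) (x : ι → ℝ≥0) :
    ∑ i, w i * x i ^ p ≤ #(univ.image x) * S.mean w x ^ p := by
  rw [← sum_fiberwise_of_maps_to (fun i _ => mem_image_of_mem x (mem_univ i)), ← nsmul_eq_mul]
  refine sum_le_card_nsmul _ _ _ fun c _ => ?_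
  rw [← mul_bernoulliMean_rpow hp hS hw]
  exact NNReal.rpow_le_rpow (mul_bernoulliMean_le_mean hmul hw x c) hp.le

theorem mean_le_rpow_sum (hconv : S.IsConvex) (hmul : S.IsMultiplicative) {p : ℝ} (hp : 0 < p)
    (hS : ∀ a, 0 < a → a ≤ 1 → S.bernoulliMean a = a ^ p⁻¹) {w : ι → ℝ≥0}
    (hw : ∑ i, w i = 1) (x : ι → ℝ≥0) :
    S.mean w x ≤ 2 * #(univ.image x) * (∑ i, w i * x i ^ p) ^ p⁻¹ := by
  refine mean_le_of_forall_mul_bernoulliMean_le hconv hmul hw fun c => ?_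
  rw [NNReal.le_rpow_inv_iff hp, mul_bernoulliMean_rpow hp hS hw]
  exact sum_le_sum_of_subset (filter_subset _ _)

end Bounds

section PowerMean

variable {S : MeanSystem} {ι : Type*} [Fintype ι]

theorem mean_eq_rpow_sum (hconv : S.IsConvex) (hmul : S.IsMultiplicative) {p : ℝ} (hp : 0 < p)
    (hS : ∀ a, 0 < a → a ≤ 1 → S.bernoulliMean a = a ^ p⁻¹) {w : ι → ℝ≥0}
    (hw : ∑ i, w i = 1) (x : ι → ℝ≥0) :
    S.mean w x = (∑ i, w i * x i ^ p) ^ p⁻¹ := by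
  have hcard (N : ℕ) : (#(univ.image fun f : Fin N → ι => ∏ k, x (f k)) : ℝ≥0) ≤
      (N + 1) ^ Fintype.card ι := mod_cast card_image_prod_le x N
  have hrpow (a : ℝ≥0) (q : ℝ) (N : ℕ) : (a ^ N) ^ q = (a ^ q) ^ N := by
    rw [← NNReal.rpow_natCast, ← NNReal.rpow_natCast, ← NNReal.rpow_mul, ← NNReal.rpow_mul,
      mul_comm]
  refine le_antisymm (le_of_forall_pow_le_mul_pow (C := 2) (m := Fintype.card ι) fun N => ?_)
    ((NNReal.rpow_inv_le_iff hp).2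
      (le_of_forall_pow_le_mul_pow (C := 1) (m := Fintype.card ι) fun N => ?_))
  · have hle := mean_le_rpow_sum hconv hmul hp hS (sum_prod_eq_one hw N) fun f => ∏ k, x (f k)
    rw [mean_pow hmul hw, sum_prod_mul_rpow, hrpow] at hle
    exact hle.trans (by gcongr; exact hcard N)
  · have hle := sum_mul_rpow_le hmul hp hS (sum_prod_eq_one hw N) fun f => ∏ k, x (f k)
    rw [mean_pow hmul hw, sum_prod_mul_rpow, hrpow] at hle
    rw [one_mul]
    exact hle.trans (by gcongr; exact hcard N)

theorem mean_eq_sup (hmul : S.IsMultiplicative)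
    (hS : ∀ a, 0 < a → a ≤ 1 → S.bernoulliMean a = 1) {w : ι → ℝ≥0} (hw : ∑ i, w i = 1)
    (x : ι → ℝ≥0) : S.mean w x = ({i | 0 < w i} : Finset ι).sup x := by
  refine le_antisymm ?_ (Finset.sup_le fun i hi => ?_)
  · refine (S.mean_mono_of_pos hw fun i hi => ?_).trans (S.mean_const hw _).le
    exact le_sup (f := x) (by simpa using hi)
  · have hlevel := mul_bernoulliMean_le_mean hmul hw x (x i)
    have hpos : 0 < ∑ j with x j = x i, w j :=
      (mem_filter.1 hi).2.trans_le (single_le_sum_of_canonicallyOrdered (by simp))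
    rwa [hS _ hpos (hw ▸ sum_le_sum_of_subset (filter_subset _ _)), mul_one] at hlevel

end PowerMean

end MeanSystem

/-- Every convex multiplicative system of means is the power mean `M_p`
for some `p ∈ [1,∞]`. -/
theorem convex_multiplicative_meanSystem_eq_powerMean
    (S : MeanSystem) (hconv : S.IsConvex) (hmul : S.IsMultiplicative) :
    ∃ p : ℝ≥0∞, 1 ≤ p ∧ ∀ (n : ℕ), 1 ≤ n → ∀ (w x : Fin n → ℝ≥0),
      (∑ i, w i) = 1 → S.M n w x = powerMean p w x := by
  obtain ⟨s, hs0, hs1, hS⟩ := MeanSystem.exists_bernoulliMean_eq_rpow hconv hmul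
  rcases hs0.eq_or_lt with rfl | hs
  · refine ⟨∞, le_top, fun n _ w x hw => ?_⟩
    rw [← S.mean_fin hw, powerMean, if_pos rfl]
    exact MeanSystem.mean_eq_sup hmul (by simpa using hS) hw x
  · refine ⟨ENNReal.ofReal s⁻¹, ENNReal.one_le_ofReal.2 ((one_le_inv₀ hs).2 hs1),
      fun n _ w x hw => ?_⟩
    have hp : 0 < s⁻¹ := inv_pos.2 hs
    rw [← S.mean_fin hw, powerMean, if_neg ENNReal.ofReal_ne_top,
      if_neg (ENNReal.ofReal_pos.2 hp).ne', ENNReal.toReal_ofReal hp.le, one_div]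
    exact MeanSystem.mean_eq_rpow_sum hconv hmul hp (by simpa using hS) hw x
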